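/- Fix a step size h > 0, an integer n ≥ 1, α > 0 and M ≥ 0, and set t_k = k·h. Let f : ℝ → ℝ be continuous, let y : ℝ → ℝ satisfy y(t) = y(0) + (1/Γ(α)) ∫₀^t (t − s)^{α−1} f(s) ds for all t ≥ 0, and suppose the interpolation error satisfies |f(t) − P(t)| ≤ M·h³/12 for all t ∈ [0, t_{n+1}], where P(t) = (f(t_n)/h)(t − t_{n−1}) − (f(t_{n−1})/h)(t − t_n). Then the remainder of the two-step fractional Adams–Bashforth method satisfies |y(t_{n+1}) − y(t_n) − (f(t_n)/(h·Γ(α)))·(2h·t_{n+1}^α/α − t_{n+1}^{α+1}/(α+1) − h·t_n^α/α + t_n^{α+1}/(α+1)) + (f(t_{n−1})/(h·Γ(α)))·(h·t_{n+1}^α/α − t_{n+1}^{α+1}/(α+1) + t_n^{α+1}/(α+1))| ≤ (h^{3+α}·M/(12·Γ(α+1)))·((n+1)^α + n^α). -/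

import Mathlib

/-!
For affine `P`, write `P s = p + q * (T - s)`. The weakly singular integral
`∫ s in 0..T, (T - s) ^ (α - 1) * P s` is then `p * T ^ α / α + q * T ^ (α + 1) / (α + 1)`, and a
uniform bound `|f - P| ≤ K` on `[0, T]` changes the integral by at most
`K * ∫ s in 0..T, (T - s) ^ (α - 1) = K * T ^ α / α`, since the kernel is nonnegative
(`abs_integral_kernel_mul_sub_le`). The method is the difference of these exact integrals of the
Lagrange interpolant at `T = t_{n+1}` and `T = t_n`, so the remainder is at most the sum of the two
error bounds, taken with `K = M * h ^ 3 / 12` and divided by `Γ(α)`; `Γ(α + 1) = α Γ(α)` gives the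
stated constant.
-/

lemma integral_sub_rpow (T r : ℝ) (hr : -1 < r) :
    ∫ s in (0:ℝ)..T, (T - s) ^ r = T ^ (r + 1) / (r + 1) := by
  rw [intervalIntegral.integral_comp_sub_left (fun x => x ^ r) T, sub_self, sub_zero,
    integral_rpow (Or.inl hr), Real.zero_rpow (by linarith), sub_zero]

lemma intervalIntegrable_sub_rpow (T r : ℝ) (hr : -1 < r) :
    IntervalIntegrable (fun s : ℝ => (T - s) ^ r) MeasureTheory.volume 0 T := by
  have h := (intervalIntegral.intervalIntegrable_rpow' (a := T) (b := 0) hr).comp_sub_left T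
  simpa using h

/-- A function uniformly `K`-close to the affine function `s ↦ p + q * (T - s)` on `[0, T]` has a
fractional integral `K * T ^ α / α`-close to that of the affine function. -/
lemma abs_integral_kernel_mul_sub_le (T α K p q : ℝ) (hT : 0 ≤ T) (hα : 0 < α)
    (f : ℝ → ℝ) (hf : Continuous f)
    (hK : ∀ s ∈ Set.Icc 0 T, |f s - (p + q * (T - s))| ≤ K) :
    |(∫ s in (0:ℝ)..T, (T - s) ^ (α - 1) * f s)
      - (p * (T ^ α / α) + q * (T ^ (α + 1) / (α + 1)))| ≤ K * (T ^ α / α) := by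
  have hk := intervalIntegrable_sub_rpow T (α - 1) (by linarith)
  have I0 : ∫ s in (0:ℝ)..T, (T - s) ^ (α - 1) = T ^ α / α := by
    rw [integral_sub_rpow T _ (by linarith), sub_add_cancel]
  have I1 : ∫ s in (0:ℝ)..T, (T - s) ^ (α - 1) * (T - s) = T ^ (α + 1) / (α + 1) := by
    rw [← integral_sub_rpow T α (by linarith)]
    refine intervalIntegral.integral_congr fun s hs => ?_
    rw [Set.uIcc_of_le hT] at hs
    -- both sides vanish at `s = T`, whatever value the kernel takes there
    rcases (sub_nonneg.2 hs.2).eq_or_lt with h0 | h0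
    · simp [← h0, Real.zero_rpow hα.ne']
    · rw [← Real.rpow_add_one h0.ne', sub_add_cancel]
  have hkf := hk.mul_continuousOn (g := f) hf.continuousOn
  have hkl := hk.mul_continuousOn (g := fun s => T - s) (by fun_prop)
  have hsum : p * (T ^ α / α) + q * (T ^ (α + 1) / (α + 1))
      = ∫ s in (0:ℝ)..T, (p * (T - s) ^ (α - 1) + q * ((T - s) ^ (α - 1) * (T - s))) := by
    rw [intervalIntegral.integral_add (hk.const_mul p) (hkl.const_mul q),
      intervalIntegral.integral_const_mul, intervalIntegral.integral_const_mul, I0, I1]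
  rw [hsum, ← intervalIntegral.integral_sub hkf ((hk.const_mul p).add (hkl.const_mul q)),
    ← I0, ← intervalIntegral.integral_const_mul, ← Real.norm_eq_abs]
  refine intervalIntegral.norm_integral_le_of_norm_le hT
    (MeasureTheory.ae_of_all _ fun s hs => ?_) (hk.const_mul K)
  have hpos : 0 ≤ (T - s) ^ (α - 1) := Real.rpow_nonneg (sub_nonneg.2 hs.2) _
  have e : (T - s) ^ (α - 1) * f s
      - (p * (T - s) ^ (α - 1) + q * ((T - s) ^ (α - 1) * (T - s)))
      = (f s - (p + q * (T - s))) * (T - s) ^ (α - 1) := by ring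
  rw [e, Real.norm_eq_abs, abs_mul, abs_of_nonneg hpos]
  exact mul_le_mul_of_nonneg_right (hK s ⟨hs.1.le, hs.2⟩) hpos


/-- Remainder bound for the two-step fractional Adams–Bashforth method for the Caputo
derivative, in terms of the Lagrange interpolation error `M h³/12`. -/
theorem adamsBashforth_caputo_remainder
    (h : ℝ) (hh : 0 < h) (n : ℕ) (hn : 1 ≤ n) (α M : ℝ) (hα : 0 < α) (hM : 0 ≤ M)
    (f : ℝ → ℝ) (hfc : Continuous f)
    (y : ℝ → ℝ)
    (hy : ∀ t ≥ (0:ℝ),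
      y t = y 0 + (1 / Real.Gamma α) * ∫ s in (0:ℝ)..t, (t - s) ^ (α - 1) * f s)
    (hinterp : ∀ t ∈ Set.Icc (0:ℝ) (((n:ℝ) + 1) * h),
      |f t - ((f ((n:ℝ) * h) / h) * (t - ((n:ℝ) - 1) * h)
          - (f (((n:ℝ) - 1) * h) / h) * (t - (n:ℝ) * h))| ≤ M * h ^ 3 / 12) :
    |y (((n:ℝ) + 1) * h) - y ((n:ℝ) * h)
        - (f ((n:ℝ) * h) / (h * Real.Gamma α)) *
            (2 * h * (((n:ℝ) + 1) * h) ^ α / α - (((n:ℝ) + 1) * h) ^ (α + 1) / (α + 1)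
              - h * ((n:ℝ) * h) ^ α / α + ((n:ℝ) * h) ^ (α + 1) / (α + 1))
        + (f (((n:ℝ) - 1) * h) / (h * Real.Gamma α)) *
            (h * (((n:ℝ) + 1) * h) ^ α / α - (((n:ℝ) + 1) * h) ^ (α + 1) / (α + 1)
              + ((n:ℝ) * h) ^ (α + 1) / (α + 1))|
      ≤ h ^ ((3:ℝ) + α) * M / (12 * Real.Gamma (α + 1)) *
          (((n:ℝ) + 1) ^ α + (n:ℝ) ^ α) := by
  have hn0 : (0:ℝ) ≤ n := n.cast_nonneg
  have hT1 : 0 ≤ ((n:ℝ) + 1) * h := by positivity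
  have hT0 : 0 ≤ (n:ℝ) * h := by positivity
  have hG : 0 < Real.Gamma α := Real.Gamma_pos_of_pos hα
  rw [hy _ hT1, hy _ hT0]
  set a := f ((n:ℝ) * h) with ha
  set b := f (((n:ℝ) - 1) * h) with hb
  have B1 := abs_integral_kernel_mul_sub_le (((n:ℝ) + 1) * h) α (M * h ^ 3 / 12)
    (2 * a - b) ((b - a) / h) hT1 hα f hfc (fun s hs => by
      convert hinterp s hs using 3
      field_simp
      ring)
  have B0 := abs_integral_kernel_mul_sub_le ((n:ℝ) * h) α (M * h ^ 3 / 12)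
    a ((b - a) / h) hT0 hα f hfc (fun s hs => by
      convert hinterp s ⟨hs.1, hs.2.trans (by nlinarith)⟩ using 3
      field_simp
      ring)
  set J1 := ∫ s in (0:ℝ)..((n:ℝ) + 1) * h, (((n:ℝ) + 1) * h - s) ^ (α - 1) * f s
  set J0 := ∫ s in (0:ℝ)..(n:ℝ) * h, ((n:ℝ) * h - s) ^ (α - 1) * f s
  have hR : h ^ ((3:ℝ) + α) * M / (12 * Real.Gamma (α + 1)) * (((n:ℝ) + 1) ^ α + (n:ℝ) ^ α)
      = (1 / Real.Gamma α) * (M * h ^ 3 / 12 * ((((n:ℝ) + 1) * h) ^ α / α)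
        + M * h ^ 3 / 12 * (((n:ℝ) * h) ^ α / α)) := by
    rw [Real.Gamma_add_one hα.ne', Real.rpow_add hh, Real.mul_rpow (by positivity) hh.le,
      Real.mul_rpow hn0 hh.le, show h ^ (3:ℝ) = h ^ 3 from mod_cast Real.rpow_natCast h 3]
    field_simp
  rw [hR]
  generalize (((n:ℝ) + 1) * h) ^ α = X1 at *
  generalize (((n:ℝ) + 1) * h) ^ (α + 1) = Z1 at *
  generalize ((n:ℝ) * h) ^ α = X0 at *
  generalize ((n:ℝ) * h) ^ (α + 1) = Z0 at *
  have e : y 0 + 1 / Real.Gamma α * J1 - (y 0 + 1 / Real.Gamma α * J0)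
      - a / (h * Real.Gamma α) * (2 * h * X1 / α - Z1 / (α + 1) - h * X0 / α + Z0 / (α + 1))
      + b / (h * Real.Gamma α) * (h * X1 / α - Z1 / (α + 1) + Z0 / (α + 1))
      = (1 / Real.Gamma α) * ((J1 - ((2 * a - b) * (X1 / α) + (b - a) / h * (Z1 / (α + 1))))
        - (J0 - (a * (X0 / α) + (b - a) / h * (Z0 / (α + 1))))) := by
    field_simp
    ring
  rw [e, abs_mul, abs_of_pos (one_div_pos.2 hG)]
  exact mul_le_mul_of_nonneg_left ((abs_sub _ _).trans (add_le_add B1 B0)) (one_div_pos.2 hG).le
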